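/- For every real damping parameter ω, the supremum over θ ∈ T^H of |1 - ω·g_m(θ)| is at least 1/3, and this supremum equals 1/3 if and only if ω = 3/4. In other words, the optimal LFA smoothing factor of the mass-based relaxation for the five-point Laplacian is 1/3, uniquely attained at ω = 3/4. -/

import Mathlib

open Real Set

/-- The high-frequency set `T^H`. -/
def TH : Set (ℝ × ℝ) :=
  (Ioc (-(π/2)) (3*π/2) ×ˢ Ioc (-(π/2)) (3*π/2)) \
    (Ioc (-(π/2)) (π/2) ×ˢ Ioc (-(π/2)) (π/2))

/-- Scaled symbol of the five-point discrete Laplacian. -/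
noncomputable def chi (θ : ℝ × ℝ) : ℝ := 4 - 2 * Real.cos θ.1 - 2 * Real.cos θ.2

/-- Scaled symbol of the product of the bilinear mass matrix and the discrete Laplacian. -/
noncomputable def gm (θ : ℝ × ℝ) : ℝ :=
  chi θ * (4 + 2 * Real.cos θ.1 + 2 * Real.cos θ.2 + Real.cos θ.1 * Real.cos θ.2) / 9

/-!
For a symbol with extreme values `0 < a ≤ b`, convexity of `t ↦ |1 - ω * t|` gives the smoothing
factor `max |1 - ω * a| |1 - ω * b|`. The identity `b * (1 - ω * a) - a * (1 - ω * b) = b - a`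
bounds it below by `(b - a) / (b + a)`, and equality forces `ω = 2 / (b + a)`. In the variables
`x = cos θ₁`, `y = cos θ₂` the symbol `gm` is a polynomial, and its extreme values on `TH` are
`8 / 9`, at `x = y = -1`, and `16 / 9`, at `x = y = 0`.
-/

section Relaxation

variable {𝕜 : Type*} [Field 𝕜] [LinearOrder 𝕜] [IsStrictOrderedRing 𝕜] {a b : 𝕜}

lemma div_le_max_abs_one_sub_mul (ha : 0 ≤ a) (hb : 0 < b) (ω : 𝕜) :
    (b - a) / (b + a) ≤ max |1 - ω * a| |1 - ω * b| := by
  rw [div_le_iff₀ (by linarith)]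
  calc
    b - a = b * (1 - ω * a) + a * -(1 - ω * b) := by ring
    _ ≤ b * max |1 - ω * a| |1 - ω * b| + a * max |1 - ω * a| |1 - ω * b| := by
      gcongr
      · exact (le_abs_self _).trans (le_max_left _ _)
      · exact (neg_le_abs _).trans (le_max_right _ _)
    _ = max |1 - ω * a| |1 - ω * b| * (b + a) := by ring

lemma max_abs_one_sub_mul_eq_div_iff (ha : 0 < a) (hab : a ≤ b) {ω : 𝕜} :
    max |1 - ω * a| |1 - ω * b| = (b - a) / (b + a) ↔ ω = 2 / (b + a) := by
  have hb : 0 < b := ha.trans_le hab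
  have hsum : 0 < b + a := add_pos hb ha
  constructor
  · intro h
    have h_left : 1 - ω * a ≤ (b - a) / (b + a) :=
      h ▸ (le_abs_self _).trans (le_max_left _ _)
    have h_right : -(1 - ω * b) ≤ (b - a) / (b + a) :=
      h ▸ (neg_le_abs _).trans (le_max_right _ _)
    rw [le_div_iff₀ hsum] at h_left h_right
    rw [eq_div_iff hsum.ne']
    apply le_antisymm
    · exact le_of_mul_le_mul_left (by linarith : b * (ω * (b + a)) ≤ b * 2) hb
    · exact le_of_mul_le_mul_left (by linarith : a * 2 ≤ a * (ω * (b + a))) ha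
  · rintro rfl
    have h_left : 1 - 2 / (b + a) * a = (b - a) / (b + a) := by field_simp; ring
    have h_right : 1 - 2 / (b + a) * b = -((b - a) / (b + a)) := by field_simp; ring
    rw [h_left, h_right, abs_neg, max_self,
      abs_of_nonneg (div_nonneg (sub_nonneg.2 hab) hsum.le)]

lemma isGreatest_image_of_convexOn {β : Type*} [AddCommGroup β] [LinearOrder β]
    [IsOrderedAddMonoid β] [Module 𝕜 β] [IsStrictOrderedModule 𝕜 β] {f : 𝕜 → β} {s t : Set 𝕜}
    (hf : ConvexOn 𝕜 s f) (hts : t ⊆ s) (ha : IsLeast t a) (hb : IsGreatest t b) :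
    IsGreatest (f '' t) (max (f a) (f b)) := by
  constructor
  · rcases max_choice (f a) (f b) with h | h <;> rw [h]
    exacts [mem_image_of_mem f ha.1, mem_image_of_mem f hb.1]
  · rintro _ ⟨z, hz, rfl⟩
    exact hf.le_max_of_mem_Icc (hts ha.1) (hts hb.1) ⟨ha.2 hz, hb.2 hz⟩

end Relaxation

lemma convexOn_abs_one_sub_mul (ω : ℝ) : ConvexOn ℝ univ fun t : ℝ => |1 - ω * t| := by
  have h := (convexOn_univ_norm (E := ℝ)).comp_affineMap (AffineMap.lineMap 1 (1 - ω) : ℝ →ᵃ[ℝ] ℝ)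
  refine h.congr fun t _ => ?_
  simp only [Function.comp_apply, AffineMap.lineMap_apply_ring', Real.norm_eq_abs]
  ring_nf

lemma isGreatest_abs_one_sub_mul_image {α : Type*} {s : Set α} {g : α → ℝ} {a b : ℝ}
    (ha : IsLeast (g '' s) a) (hb : IsGreatest (g '' s) b) (ω : ℝ) :
    IsGreatest ((fun θ => |1 - ω * g θ|) '' s) (max |1 - ω * a| |1 - ω * b|) := by
  have h := isGreatest_image_of_convexOn (convexOn_abs_one_sub_mul ω) (subset_univ _) ha hb
  rwa [image_image] at h

lemma gm_swap (θ : ℝ × ℝ) : gm θ.swap = gm θ := by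
  simp only [gm, chi, Prod.fst_swap, Prod.snd_swap]
  ring

lemma gm_le (θ : ℝ × ℝ) : gm θ ≤ 16 / 9 := by
  set x := cos θ.1
  set y := cos θ.2
  have hx : x ∈ Icc (-1) 1 := cos_mem_Icc _
  have hy : y ∈ Icc (-1) 1 := cos_mem_Icc _
  have h_chi : 0 ≤ 4 - 2 * (x + y) := by linarith [hx.2, hy.2]
  have h_prod : x * y ≤ (x + y) ^ 2 / 4 := by linarith [four_mul_le_sq_add x y]
  have h_cubic : 0 ≤ (x + y) ^ 2 * (3 + (x + y) / 2) :=
    mul_nonneg (sq_nonneg _) (by linarith [hx.1, hy.1])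
  calc
    gm θ = (4 - 2 * (x + y)) * (4 + 2 * (x + y) + x * y) / 9 := by
      simp only [gm, chi, x, y]
      ring
    _ ≤ (4 - 2 * (x + y)) * (4 + 2 * (x + y) + (x + y) ^ 2 / 4) / 9 := by gcongr
    _ = (16 - (x + y) ^ 2 * (3 + (x + y) / 2)) / 9 := by ring
    _ ≤ 16 / 9 := by linarith

lemma le_gm_of_cos_fst_nonpos {θ : ℝ × ℝ} (hθ : cos θ.1 ≤ 0) : 8 / 9 ≤ gm θ := by
  set x := cos θ.1
  set y := cos θ.2
  have hx : 0 ≤ 1 + x := by linarith [neg_one_le_cos θ.1]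
  have hx' : 0 ≤ -x := neg_nonneg.2 hθ
  have hy : 0 ≤ 1 + y := by linarith [neg_one_le_cos θ.2]
  have hy' : 0 ≤ 1 - y := sub_nonneg.2 (cos_le_one θ.2)
  -- The symbol is concave in `x`: interpolate between its values at `x = -1` and `x = 0`.
  have h_interp : 9 * gm θ - 8 = (4 + 2 * y) * (-x * (1 + x)) +
      -x * (2 * ((2 - y) * (1 + y))) + (1 + x) * (4 + 4 * ((1 - y) * (1 + y))) := by
    simp only [gm, chi, x, y]
    ring
  have h_two_add : 0 ≤ 4 + 2 * y := by linarith
  have h_two_sub : 0 ≤ 2 - y := by linarith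
  have h_nonneg : 0 ≤ 9 * gm θ - 8 := by
    rw [h_interp]
    positivity
  linarith

lemma cos_nonpos_of_mem_TH {θ : ℝ × ℝ} (hθ : θ ∈ TH) : cos θ.1 ≤ 0 ∨ cos θ.2 ≤ 0 := by
  have cos_nonpos {t : ℝ} (ht : t ∈ Ioc (-(π / 2)) (3 * π / 2))
      (ht' : t ∉ Ioc (-(π / 2)) (π / 2)) : cos t ≤ 0 := by
    have hlt : π / 2 < t := not_le.1 fun h => ht' ⟨ht.1, h⟩
    exact cos_nonpos_of_pi_div_two_le_of_le hlt.le (by linarith [ht.2])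
  obtain ⟨⟨h₁, h₂⟩, h_low⟩ := hθ
  exact (not_and_or.1 h_low).imp (cos_nonpos h₁) (cos_nonpos h₂)

lemma le_gm_of_mem_TH {θ : ℝ × ℝ} (hθ : θ ∈ TH) : 8 / 9 ≤ gm θ := by
  rcases cos_nonpos_of_mem_TH hθ with h | h
  · exact le_gm_of_cos_fst_nonpos h
  · rw [← gm_swap]
    exact le_gm_of_cos_fst_nonpos h

lemma mem_TH_of_pi_div_two_lt_fst {θ : ℝ × ℝ} (h₁ : θ.1 ∈ Ioc (π / 2) (3 * π / 2))
    (h₂ : θ.2 ∈ Ioc (-(π / 2)) (3 * π / 2)) : θ ∈ TH :=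
  ⟨⟨⟨by linarith [pi_pos, h₁.1], h₁.2⟩, h₂⟩, fun h => h₁.1.not_ge h.1.2⟩

lemma isLeast_gm_image_TH : IsLeast (gm '' TH) (8 / 9) := by
  refine ⟨⟨(π, π), ?_, ?_⟩, forall_mem_image.2 fun _ => le_gm_of_mem_TH⟩
  · apply mem_TH_of_pi_div_two_lt_fst <;> constructor <;> linarith [pi_pos]
  · norm_num [gm, chi]

lemma isGreatest_gm_image_TH : IsGreatest (gm '' TH) (16 / 9) := by
  refine ⟨⟨(3 * π / 2, π / 2), ?_, ?_⟩, forall_mem_image.2 fun θ _ => gm_le θ⟩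
  · apply mem_TH_of_pi_div_two_lt_fst <;> constructor <;> linarith [pi_pos]
  · have h_cos : cos (3 * π / 2) = 0 := by
      rw [show 3 * π / 2 = π / 2 + π by ring, cos_add_pi, cos_pi_div_two, neg_zero]
    norm_num [gm, chi, h_cos]

theorem stmt_3 (ω : ℝ) :
    1/3 ≤ sSup ((fun θ => |1 - ω * gm θ|) '' TH) ∧
      (sSup ((fun θ => |1 - ω * gm θ|) '' TH) = 1/3 ↔ ω = 3/4) := by
  rw [(isGreatest_abs_one_sub_mul_image isLeast_gm_image_TH isGreatest_gm_image_TH ω).csSup_eq]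
  have h_rate : (1 / 3 : ℝ) = (16 / 9 - 8 / 9) / (16 / 9 + 8 / 9) := by norm_num
  have h_damping : (3 / 4 : ℝ) = 2 / (16 / 9 + 8 / 9) := by norm_num
  rw [h_rate, h_damping]
  exact ⟨div_le_max_abs_one_sub_mul (by norm_num) (by norm_num) ω,
    max_abs_one_sub_mul_eq_div_iff (by norm_num) (by norm_num)⟩
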